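/- Let T be a rectangular standard Young tableau with m-diagram φ(T) having components C_1,...,C_k with endpoint sets ∂C_1,...,∂C_k, which partition {1,...,n} where n = |T|. Then the endpoint sets of the components of φ(P(T)) are exactly ρ(∂C_1),...,ρ(∂C_k), where ρ(S) = {s-1 mod n : s ∈ S}. In particular φ(T) and φ(P(T)) have the same number of components. -/

import Mathlib

/-- `T` (as a function `ℕ → ℕ → ℕ`, row-column indexed from `0`) is a rectangular
standard Young tableau with `r` rows, `c` columns and content `{1,…,r*c}` :
rows strictly increase left-to-right, columns strictly increase top-to-bottom. -/
def IsRectSYT (r c : ℕ) (T : ℕ → ℕ → ℕ) : Prop :=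
  (∀ i j, i < r → j + 1 < c → T i j < T i (j + 1)) ∧
  (∀ i j, i + 1 < r → j < c → T i j < T (i + 1) j) ∧
  (∀ i j, i < r → j < c → 1 ≤ T i j ∧ T i j ≤ r * c) ∧
  (∀ v, 1 ≤ v → v ≤ r * c → ∃ i j, i < r ∧ j < c ∧ T i j = v)

/-- One step of the jeu de taquin slide of the empty box at position `p` in an
`r × c` rectangular tableau: slide the right neighbour `b` left if `b < a` (entries
being distinct, `≤` and `<` agree), else slide the lower neighbour `a` up. -/
def slideNext (r c : ℕ) (T : ℕ → ℕ → ℕ) (p : ℕ × ℕ) : ℕ × ℕ :=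
  if p.1 + 1 < r ∧ p.2 + 1 < c then
    (if T p.1 (p.2 + 1) ≤ T (p.1 + 1) p.2 then (p.1, p.2 + 1) else (p.1 + 1, p.2))
  else if p.2 + 1 < c then (p.1, p.2 + 1)
  else if p.1 + 1 < r then (p.1 + 1, p.2)
  else p

/-- The sliding path of the empty box during promotion, starting in the top-left
corner; the path stabilizes once the empty box has nothing below or to its right. -/
def slidePath (r c : ℕ) (T : ℕ → ℕ → ℕ) : ℕ → ℕ × ℕ
  | 0 => (0, 0)
  | k + 1 => slideNext r c T (slidePath r c T k)

open Classical in
/-- Jeu de taquin promotion of a rectangular standard Young tableau: erase the entry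
`1` in the top-left corner, slide along the sliding path, decrement all entries by `1`
and put `r*c` in the final empty box. -/
noncomputable def promote (r c : ℕ) (T : ℕ → ℕ → ℕ) : ℕ → ℕ → ℕ := fun i j =>
  if (i, j) = slidePath r c T (r + c) then r * c
  else if h : ∃ k, slidePath r c T k = (i, j) then
    T (slidePath r c T (Nat.find h + 1)).1 (slidePath r c T (Nat.find h + 1)).2 - 1
  else T i j - 1

/-- The greedy matching between rows `i` and `i+1` of `T` : the list whose `j`-th item
is the column (in row `i`) matched to column `j` of row `i+1`, namely the largest
column `j'` of row `i` with `T i j' ≤ T (i+1) j` that is not already matched. -/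
def partnerList (c : ℕ) (T : ℕ → ℕ → ℕ) (i : ℕ) : ℕ → List ℕ
  | 0 => []
  | j + 1 =>
    let prev := partnerList c T i j
    prev ++ [((List.range c).filter
      (fun j' => decide (T i j' ≤ T (i + 1) j ∧ j' ∉ prev))).foldr max 0]

/-- The column of row `i` matched to column `j` of row `i+1` by the greedy algorithm. -/
def partnerCol (c : ℕ) (T : ℕ → ℕ → ℕ) (i j : ℕ) : ℕ :=
  (partnerList c T i (j + 1)).getD j 0

/-- The m-diagram `φ(T)` of an `r × c` rectangular standard Young tableau: the union
over `0 ≤ i ≤ r-2` of the arcs `(T i (partnerCol c T i j), T (i+1) j)` of the greedy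
matchings between consecutive rows. -/
def mDiagram (r c : ℕ) (T : ℕ → ℕ → ℕ) : Finset (ℕ × ℕ) :=
  ((Finset.range (r - 1)) ×ˢ (Finset.range c)).image
    (fun p => (T p.1 (partnerCol c T p.1 p.2), T (p.1 + 1) p.2))

/-- The set of endpoints of a collection of arcs. -/
def endpoints (C : Finset (ℕ × ℕ)) : Finset ℕ := C.image Prod.fst ∪ C.image Prod.snd

/-- Two arcs share an endpoint. -/
def SharesEndpoint (p q : ℕ × ℕ) : Prop :=
  p.1 = q.1 ∨ p.1 = q.2 ∨ p.2 = q.1 ∨ p.2 = q.2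

/-- Two arcs cross. -/
def Crosses (p q : ℕ × ℕ) : Prop :=
  (p.1 < q.1 ∧ q.1 < p.2 ∧ p.2 < q.2) ∨ (q.1 < p.1 ∧ p.1 < q.2 ∧ q.2 < p.2)

/-- `C` is a nonempty subcollection of `M` closed under sharing endpoints, such that
no arc of `M` outside `C` crosses an arc of `C`. -/
def IsPreSubdiagram (M C : Finset (ℕ × ℕ)) : Prop :=
  C ⊆ M ∧ C.Nonempty ∧
  (∀ p ∈ M, ∀ q ∈ C, SharesEndpoint p q → p ∈ C) ∧
  (∀ p ∈ M, p ∉ C → ∀ q ∈ C, ¬ Crosses p q)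

/-- `C` is a sub-diagram of `M` : a nonempty **proper** subcollection closed under
sharing endpoints and not crossed from outside. -/
def IsSubdiagram (M C : Finset (ℕ × ℕ)) : Prop := IsPreSubdiagram M C ∧ C ≠ M

/-- `C` is a component of `M` : it satisfies the closure conditions and has no proper
subcollection forming a sub-diagram of `M`. -/
def IsComponent (M C : Finset (ℕ × ℕ)) : Prop :=
  IsPreSubdiagram M C ∧ ∀ C', C' ⊂ C → ¬ IsSubdiagram M C'

/-- A collection of arcs is uniform if its endpoints are consecutive integers. -/
def IsUniform (C : Finset (ℕ × ℕ)) : Prop := ∃ a b, endpoints C = Finset.Icc a b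

/-- `ρ` on `{1,…,n}` : `i ↦ i-1 mod n`, with representatives in `{1,…,n}`. -/
def rotIdx (n i : ℕ) : ℕ := if i = 1 then n else i - 1

/-- Rotation of an arc, reordered so the smaller endpoint comes first. -/
def rotArc (n : ℕ) (p : ℕ × ℕ) : ℕ × ℕ :=
  (min (rotIdx n p.1) (rotIdx n p.2), max (rotIdx n p.1) (rotIdx n p.2))

/-- `d`-fold rotation of a set of boundary points. -/
def rotSetPow (n d : ℕ) (S : Finset ℕ) : Finset ℕ := S.image ((rotIdx n)^[d])

/-- The partition of the boundary `{1,…,r*c}` induced by the endpoint sets of the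
components of `φ(T)` is invariant under `d`-fold rotation. -/
def RotSym (r c : ℕ) (T : ℕ → ℕ → ℕ) (d : ℕ) : Prop :=
  {A : Finset ℕ | ∃ C, IsComponent (mDiagram r c T) C ∧ A = rotSetPow (r * c) d (endpoints C)}
    = {A : Finset ℕ | ∃ C, IsComponent (mDiagram r c T) C ∧ A = endpoints C}

/-!
Let `n = r * c`, and let `b₀ = 1, b₁, …, b_{r-1}` be the entries at which the sliding path of
promotion enters the successive rows of `T`, with `b_r = n + 1`. Before the entries are
decremented, the slide only replaces `b_i` by `b_{i+1}` in the entry set of row `i`. Call a set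
`U` of vertices closed if no arc joins it to its complement and no arc on it crosses an arc off
it; the endpoint sets of the components are the minimal nonempty closed sets of endpoints.

Let `U` be closed and avoid `1` and `n + 1`. Then no `b_i` lies under an arc on `U`: the arc of
`φ(T)` ending at `b_{i+1}` starts at or before `b_i`, so an arc on `U` covering `b_{i+1}`, which
cannot cross it, also covers `b_i`; descending in `i`, an arc on `U` would cover `b₀ = 1`. After
the slide, the arc starting at `b_{i+1}` reaches `b_{i+2}`, and the same argument ascends to
`b_r = n + 1`. Since the part of a noncrossing matching under one of its arcs depends only on the
row entries under that arc, both diagrams have the same arcs on `U`, so `U` is closed for one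
exactly when it is closed for the other. Passing to complements, the same holds for sets containing
both `1` and `n + 1`. These two cases cover all preimages under `ρ`: decrementing turns `n + 1` into
`n = ρ(1)`.
-/

section NoncrossingMatching

/-- A perfect matching between a set `A` of openers and a set `B` of closers by pairwise
noncrossing arcs, each recorded as a pair (opener, closer). -/
structure IsNoncrossingMatching (A B : Set ℕ) (E : Set (ℕ × ℕ)) : Prop where
  fst_bijOn : Set.BijOn Prod.fst E A
  snd_bijOn : Set.BijOn Prod.snd E B
  fst_lt_snd : ∀ p ∈ E, p.1 < p.2
  not_crosses : ∀ p ∈ E, ∀ q ∈ E, ¬ Crosses p q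

namespace IsNoncrossingMatching

variable {A B A' B' : Set ℕ} {E E' : Set (ℕ × ℕ)} {p q : ℕ × ℕ}

theorem snd_lt_snd_of_fst_mem_Ioo (h : IsNoncrossingMatching A B E) (hp : p ∈ E) (hq : q ∈ E)
    (hpq : q.1 ∈ Set.Ioo p.1 p.2) : q.2 < p.2 := by
  refine lt_of_le_of_ne (not_lt.1 fun hlt => h.not_crosses p hp q hq (.inl ⟨hpq.1, hpq.2, hlt⟩))
    fun he => hpq.1.ne ?_
  rw [h.snd_bijOn.injOn hq hp he]

theorem fst_lt_fst_of_snd_mem_Ioo (h : IsNoncrossingMatching A B E) (hp : p ∈ E) (hq : q ∈ E)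
    (hpq : q.2 ∈ Set.Ioo p.1 p.2) : p.1 < q.1 := by
  refine lt_of_le_of_ne
    (not_lt.1 fun hlt => h.not_crosses p hp q hq (.inr ⟨hlt, hpq.1, hpq.2⟩)) fun he => hpq.2.ne ?_
  rw [h.fst_bijOn.injOn hp hq he]

theorem encard_inter_Ioo (h : IsNoncrossingMatching A B E) (hp : p ∈ E) :
    (A ∩ Set.Ioo p.1 p.2).encard = (B ∩ Set.Ioo p.1 p.2).encard := by
  let nested : Set (ℕ × ℕ) := {q ∈ E | p.1 < q.1 ∧ q.2 < p.2}
  have fst_nested : Prod.fst '' nested = A ∩ Set.Ioo p.1 p.2 := by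
    ext a
    constructor
    · rintro ⟨q, ⟨hq, h1, h2⟩, rfl⟩
      exact ⟨h.fst_bijOn.mapsTo hq, h1, (h.fst_lt_snd q hq).trans h2⟩
    · rintro ⟨ha, hap⟩
      obtain ⟨q, hq, rfl⟩ := h.fst_bijOn.surjOn ha
      exact ⟨q, ⟨hq, hap.1, h.snd_lt_snd_of_fst_mem_Ioo hp hq hap⟩, rfl⟩
  have snd_nested : Prod.snd '' nested = B ∩ Set.Ioo p.1 p.2 := by
    ext b
    constructor
    · rintro ⟨q, ⟨hq, h1, h2⟩, rfl⟩
      exact ⟨h.snd_bijOn.mapsTo hq, h1.trans (h.fst_lt_snd q hq), h2⟩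
    · rintro ⟨hb, hbp⟩
      obtain ⟨q, hq, rfl⟩ := h.snd_bijOn.surjOn hb
      exact ⟨q, ⟨hq, h.fst_lt_fst_of_snd_mem_Ioo hp hq hbp, hbp.2⟩, rfl⟩
  have nested_subset : nested ⊆ E := fun q hq => hq.1
  rw [← fst_nested, ← snd_nested, (h.fst_bijOn.injOn.mono nested_subset).encard_image,
    (h.snd_bijOn.injOn.mono nested_subset).encard_image]

theorem mem_of_agree_on_Icc (h : IsNoncrossingMatching A B E) (h' : IsNoncrossingMatching A' B' E')
    (hp : p ∈ E) (hA : ∀ v ∈ Set.Icc p.1 p.2, v ∈ A ↔ v ∈ A')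
    (hB : ∀ v ∈ Set.Icc p.1 p.2, v ∈ B ↔ v ∈ B') : p ∈ E' := by
  induction hd : p.2 - p.1 using Nat.strong_induction_on generalizing p with
  | _ d ih =>
  have hlt := h.fst_lt_snd p hp
  have nested_mem : ∀ q ∈ E, p.1 ≤ q.1 → q.2 ≤ p.2 → q.2 - q.1 < d → q ∈ E' :=
    fun q hq h1 h2 hqd => ih _ hqd hq (fun v hv => hA v ⟨h1.trans hv.1, hv.2.trans h2⟩)
      (fun v hv => hB v ⟨h1.trans hv.1, hv.2.trans h2⟩) rfl
  obtain ⟨q, hq, hqp⟩ := h'.fst_bijOn.surjOn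
    ((hA _ ⟨le_rfl, hlt.le⟩).1 (h.fst_bijOn.mapsTo hp))
  have hqlt := h'.fst_lt_snd q hq
  -- If `q` ended strictly under `p`, its closer would end a shorter arc of `E`, hence of `E'`.
  have hle : p.2 ≤ q.2 := by
    by_contra! hcon
    have hmem : q.2 ∈ Set.Ioo p.1 p.2 := ⟨hqp ▸ hqlt, hcon⟩
    obtain ⟨t, ht, htq⟩ := h.snd_bijOn.surjOn
      ((hB _ (Set.Ioo_subset_Icc_self hmem)).2 (h'.snd_bijOn.mapsTo hq))
    have hpt := h.fst_lt_fst_of_snd_mem_Ioo hp ht (htq ▸ hmem)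
    have ht' := nested_mem t ht hpt.le (by lia) (by lia)
    have := congrArg Prod.fst (h'.snd_bijOn.injOn ht' hq htq)
    lia
  have hge : q.2 ≤ p.2 := by
    by_contra! hcon
    obtain ⟨q', hq', hqp'⟩ := h'.snd_bijOn.surjOn
      ((hB _ ⟨hlt.le, le_rfl⟩).1 (h.snd_bijOn.mapsTo hp))
    have hmem : q'.1 ∈ Set.Ioo p.1 p.2 := by
      refine ⟨hqp ▸ h'.fst_lt_fst_of_snd_mem_Ioo hq hq' ?_, hqp' ▸ h'.fst_lt_snd q' hq'⟩
      exact ⟨by lia, hqp' ▸ hcon⟩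
    obtain ⟨t, ht, htq⟩ := h.fst_bijOn.surjOn
      ((hA _ (Set.Ioo_subset_Icc_self hmem)).2 (h'.fst_bijOn.mapsTo hq'))
    have htp := h.snd_lt_snd_of_fst_mem_Ioo hp ht (htq ▸ hmem)
    have ht' := nested_mem t ht (htq ▸ hmem.1.le) htp.le (by have := hmem.1; lia)
    have := congrArg Prod.snd (h'.fst_bijOn.injOn ht' hq' htq)
    lia
  rwa [← Prod.ext hqp (hge.antisymm hle)]

end IsNoncrossingMatching

end NoncrossingMatching

section ArcClosed

/-- `S` is a union of endpoint sets of components of the arc collection `M`, up to points that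
are not endpoints of `M` at all: arcs sharing an endpoint, and arcs crossing each other, have
their endpoints either all in `S` or all outside `S`. -/
structure IsArcClosed (M : Set (ℕ × ℕ)) (S : Set ℕ) : Prop where
  fst_mem_iff : ∀ p ∈ M, (p.1 ∈ S ↔ p.2 ∈ S)
  fst_mem_of_crosses : ∀ p ∈ M, ∀ q ∈ M, Crosses p q → p.1 ∈ S → q.1 ∈ S

/-- The part of the line covered by the arcs of `M` that start in `S`, together with `S`. -/
def shadow (M : Set (ℕ × ℕ)) (S : Set ℕ) : Set ℕ :=
  S ∪ ⋃ p ∈ {p ∈ M | p.1 ∈ S}, Set.Icc p.1 p.2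

theorem mem_shadow {M : Set (ℕ × ℕ)} {S : Set ℕ} {v : ℕ} :
    v ∈ shadow M S ↔ v ∈ S ∨ ∃ p ∈ M, p.1 ∈ S ∧ v ∈ Set.Icc p.1 p.2 := by
  simp only [shadow, Set.mem_union, Set.mem_iUnion, Set.mem_ofPred_eq, exists_prop, and_assoc]

theorem Crosses.symm {p q : ℕ × ℕ} (h : Crosses p q) : Crosses q p := Or.symm h

namespace IsArcClosed

variable {M : Set (ℕ × ℕ)} {S S' : Set ℕ}

theorem compl (h : IsArcClosed M S) : IsArcClosed M Sᶜ where
  fst_mem_iff p hp := not_congr (h.fst_mem_iff p hp)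
  fst_mem_of_crosses p hp q hq hpq := mt (h.fst_mem_of_crosses q hq p hp hpq.symm)

theorem congr (h : IsArcClosed M S) (hS : ∀ p ∈ M, (p.1 ∈ S ↔ p.1 ∈ S') ∧ (p.2 ∈ S ↔ p.2 ∈ S')) :
    IsArcClosed M S' where
  fst_mem_iff p hp := (hS p hp).1.symm.trans ((h.fst_mem_iff p hp).trans (hS p hp).2)
  fst_mem_of_crosses p hp q hq hpq hpS :=
    (hS q hq).1.1 (h.fst_mem_of_crosses p hp q hq hpq ((hS p hp).1.2 hpS))

theorem Icc_subset_shadow (h : IsArcClosed M S) {q : ℕ × ℕ} (hq : q ∈ M)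
    (hmem : q.1 ∈ shadow M S ∨ q.2 ∈ shadow M S) : Set.Icc q.1 q.2 ⊆ shadow M S := by
  by_cases hqS : q.1 ∈ S
  · exact fun v hv => mem_shadow.2 (.inr ⟨q, hq, hqS, hv⟩)
  have hqS' : q.2 ∉ S := mt (h.fst_mem_iff q hq).2 hqS
  obtain ⟨p, hp, hpS, hpq⟩ :
      ∃ p ∈ M, p.1 ∈ S ∧ (q.1 ∈ Set.Icc p.1 p.2 ∨ q.2 ∈ Set.Icc p.1 p.2) := by
    rcases hmem with hmem | hmem
    · obtain hS | ⟨p, hp, hpS, hpq⟩ := mem_shadow.1 hmem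
      exacts [(hqS hS).elim, ⟨p, hp, hpS, .inl hpq⟩]
    · obtain hS | ⟨p, hp, hpS, hpq⟩ := mem_shadow.1 hmem
      exacts [(hqS' hS).elim, ⟨p, hp, hpS, .inr hpq⟩]
  have hpS' := (h.fst_mem_iff p hp).1 hpS
  have fst_ne_fst := ne_of_mem_of_not_mem hpS hqS
  have fst_ne_snd := ne_of_mem_of_not_mem hpS hqS'
  have snd_ne_fst := ne_of_mem_of_not_mem hpS' hqS
  have snd_ne_snd := ne_of_mem_of_not_mem hpS' hqS'
  have not_cross : ¬ Crosses p q := fun hc => hqS (h.fst_mem_of_crosses p hp q hq hc hpS)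
  simp only [Crosses, Set.mem_Icc] at not_cross hpq
  have nested : p.1 ≤ q.1 ∧ q.2 ≤ p.2 := by lia
  exact fun v hv => mem_shadow.2 (.inr ⟨p, hp, hpS, nested.1.trans hv.1, hv.2.trans nested.2⟩)

theorem mem_of_mem_shadow (h : IsArcClosed M S) {v : ℕ} (hv : v ∈ shadow M S)
    (hext : ∀ p ∈ M, v ≤ p.1 ∨ p.2 ≤ v) : v ∈ S := by
  obtain hv | ⟨p, hp, hpS, hvp⟩ := mem_shadow.1 hv
  · exact hv
  rcases hext p hp with hle | hle
  · rwa [hle.antisymm hvp.1]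
  · rwa [← hle.antisymm hvp.2, ← h.fst_mem_iff p hp]

variable {ι : Type*} {A B A' B' : ι → Set ℕ} {E E' : ι → Set (ℕ × ℕ)}

theorem mem_of_agree_on_shadow (hE : ∀ k, IsNoncrossingMatching (A k) (B k) (E k))
    (hE' : ∀ k, IsNoncrossingMatching (A' k) (B' k) (E' k)) (h : IsArcClosed (⋃ k, E k) S)
    (hA : ∀ k, ∀ v ∈ shadow (⋃ k, E k) S, v ∈ A k ↔ v ∈ A' k)
    (hB : ∀ k, ∀ v ∈ shadow (⋃ k, E k) S, v ∈ B k ↔ v ∈ B' k) {k : ι} {p : ℕ × ℕ}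
    (hp : p ∈ E' k) (hmem : p.1 ∈ shadow (⋃ k, E k) S ∨ p.2 ∈ shadow (⋃ k, E k) S) :
    p ∈ E k := by
  have mem_E' : ∀ q ∈ E k, q.1 ∈ shadow (⋃ k, E k) S ∨ q.2 ∈ shadow (⋃ k, E k) S → q ∈ E' k := by
    intro q hq hqmem
    have hsub := h.Icc_subset_shadow (Set.mem_iUnion_of_mem k hq) hqmem
    exact (hE k).mem_of_agree_on_Icc (hE' k) hq (fun v hv => hA k v (hsub hv))
      fun v hv => hB k v (hsub hv)
  rcases hmem with hmem | hmem
  · obtain ⟨q, hq, hqp⟩ := (hE k).fst_bijOn.surjOn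
      ((hA k _ hmem).2 ((hE' k).fst_bijOn.mapsTo hp))
    rwa [← (hE' k).fst_bijOn.injOn (mem_E' q hq (.inl (hqp ▸ hmem))) hp hqp]
  · obtain ⟨q, hq, hqp⟩ := (hE k).snd_bijOn.surjOn
      ((hB k _ hmem).2 ((hE' k).snd_bijOn.mapsTo hp))
    rwa [← (hE' k).snd_bijOn.injOn (mem_E' q hq (.inr (hqp ▸ hmem))) hp hqp]

theorem of_agree_on_shadow (hE : ∀ k, IsNoncrossingMatching (A k) (B k) (E k))
    (hE' : ∀ k, IsNoncrossingMatching (A' k) (B' k) (E' k)) (h : IsArcClosed (⋃ k, E k) S)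
    (hA : ∀ k, ∀ v ∈ shadow (⋃ k, E k) S, v ∈ A k ↔ v ∈ A' k)
    (hB : ∀ k, ∀ v ∈ shadow (⋃ k, E k) S, v ∈ B k ↔ v ∈ B' k) :
    IsArcClosed (⋃ k, E' k) S := by
  have subset_shadow : S ⊆ shadow (⋃ k, E k) S := Set.subset_union_left
  have mem_E := fun k (p : ℕ × ℕ) (hp : p ∈ E' k) =>
    mem_of_agree_on_shadow hE hE' h hA hB hp
  refine ⟨fun p hp => ?_, fun p hp q hq hpq hpS => ?_⟩
  · obtain ⟨k, hp⟩ := Set.mem_iUnion.1 hp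
    have hiff : p ∈ E k → (p.1 ∈ S ↔ p.2 ∈ S) :=
      fun hpE => h.fst_mem_iff p (Set.mem_iUnion_of_mem k hpE)
    exact ⟨fun h1 => (hiff (mem_E k p hp (.inl (subset_shadow h1)))).1 h1,
      fun h2 => (hiff (mem_E k p hp (.inr (subset_shadow h2)))).2 h2⟩
  · obtain ⟨k, hp⟩ := Set.mem_iUnion.1 hp
    obtain ⟨l, hq⟩ := Set.mem_iUnion.1 hq
    have hpE := Set.mem_iUnion_of_mem k (mem_E k p hp (.inl (subset_shadow hpS)))
    have under_p : ∀ v ∈ Set.Icc p.1 p.2, v ∈ shadow (⋃ k, E k) S :=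
      h.Icc_subset_shadow hpE (.inl (subset_shadow hpS))
    have hqmem : q.1 ∈ shadow (⋃ k, E k) S ∨ q.2 ∈ shadow (⋃ k, E k) S := by
      rcases hpq with ⟨h1, h2, -⟩ | ⟨-, h1, h2⟩
      exacts [.inl (under_p _ ⟨h1.le, h2.le⟩), .inr (under_p _ ⟨h1.le, h2.le⟩)]
    exact h.fst_mem_of_crosses p hpE q (Set.mem_iUnion_of_mem l (mem_E l q hq hqmem)) hpq hpS

end IsArcClosed

end ArcClosed

section Component

variable {M M' C D : Finset (ℕ × ℕ)} {S : Finset ℕ} {p : ℕ × ℕ}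

theorem mem_endpoints {v : ℕ} : v ∈ endpoints C ↔ ∃ p ∈ C, p.1 = v ∨ p.2 = v := by
  simp only [endpoints, Finset.mem_union, Finset.mem_image, ← exists_or, ← and_or_left]

theorem fst_mem_endpoints (hp : p ∈ C) : p.1 ∈ endpoints C :=
  mem_endpoints.2 ⟨p, hp, .inl rfl⟩

theorem snd_mem_endpoints (hp : p ∈ C) : p.2 ∈ endpoints C :=
  mem_endpoints.2 ⟨p, hp, .inr rfl⟩

theorem endpoints_subset_endpoints (h : C ⊆ D) : endpoints C ⊆ endpoints D :=
  Finset.union_subset_union (Finset.image_subset_image h) (Finset.image_subset_image h)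

theorem isComponent_iff_minimal : IsComponent M C ↔ Minimal (IsPreSubdiagram M) C := by
  refine and_congr_right fun hC => ⟨fun h D hD hDC => ?_, fun h D hDC hD => ?_⟩
  · by_contra hCD
    have hss : D ⊂ C := Finset.ssubset_iff_subset_ne.2 ⟨hDC, fun he => hCD he.ge⟩
    exact h D hss ⟨hD, (hss.trans_subset hC.1).ne⟩
  · exact hDC.2 (h hD.1 hDC.1)

/-- A nonempty set of endpoints of `M` that contains all endpoints of every arc sharing an
endpoint with, or crossing, one of its arcs: the endpoint set of a union of components. -/
structure IsClosedVertexSet (M : Finset (ℕ × ℕ)) (S : Finset ℕ) : Prop where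
  nonempty : S.Nonempty
  subset : S ⊆ endpoints M
  isArcClosed : IsArcClosed (M : Set (ℕ × ℕ)) (S : Set ℕ)

namespace IsPreSubdiagram

theorem fst_mem_endpoints_iff (hC : IsPreSubdiagram M C) (hp : p ∈ M) :
    p.1 ∈ endpoints C ↔ p ∈ C := by
  refine ⟨fun h => ?_, fst_mem_endpoints⟩
  obtain ⟨q, hq, hqp | hqp⟩ := mem_endpoints.1 h
  exacts [hC.2.2.1 p hp q hq (.inl hqp.symm), hC.2.2.1 p hp q hq (.inr (.inl hqp.symm))]

theorem snd_mem_endpoints_iff (hC : IsPreSubdiagram M C) (hp : p ∈ M) :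
    p.2 ∈ endpoints C ↔ p ∈ C := by
  refine ⟨fun h => ?_, snd_mem_endpoints⟩
  obtain ⟨q, hq, hqp | hqp⟩ := mem_endpoints.1 h
  exacts [hC.2.2.1 p hp q hq (.inr (.inr (.inl hqp.symm))),
    hC.2.2.1 p hp q hq (.inr (.inr (.inr hqp.symm)))]

theorem endpoints_subset_endpoints_iff (hC : IsPreSubdiagram M C) (hD : IsPreSubdiagram M D) :
    endpoints C ⊆ endpoints D ↔ C ⊆ D :=
  ⟨fun h _ hp => (hD.fst_mem_endpoints_iff (hC.1 hp)).1 (h (fst_mem_endpoints hp)),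
    endpoints_subset_endpoints⟩

theorem isClosedVertexSet (hC : IsPreSubdiagram M C) : IsClosedVertexSet M (endpoints C) where
  nonempty := let ⟨_, hp⟩ := hC.2.1; ⟨_, fst_mem_endpoints hp⟩
  subset := endpoints_subset_endpoints hC.1
  isArcClosed :=
    { fst_mem_iff := fun _ hp =>
        (hC.fst_mem_endpoints_iff hp).trans (hC.snd_mem_endpoints_iff hp).symm
      fst_mem_of_crosses := fun p hp q hq hpq hpC => by
        refine (hC.fst_mem_endpoints_iff hq).2 (by_contra fun hqC => ?_)
        exact hC.2.2.2 q hq hqC p ((hC.fst_mem_endpoints_iff hp).1 hpC) hpq.symm }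

end IsPreSubdiagram

theorem IsClosedVertexSet.exists_isPreSubdiagram (hS : IsClosedVertexSet M S) :
    ∃ C, IsPreSubdiagram M C ∧ endpoints C = S := by
  have hcl := hS.isArcClosed
  let C := M.filter fun p => p.1 ∈ S
  have mem_C : ∀ q ∈ M, q.1 ∈ S ∨ q.2 ∈ S → q ∈ C := fun q hq hqS =>
    Finset.mem_filter.2 ⟨hq, hqS.elim id (hcl.fst_mem_iff q hq).2⟩
  have endpoints_C : endpoints C = S := by
    ext v
    constructor
    · intro hv
      obtain ⟨p, hp, rfl | rfl⟩ := mem_endpoints.1 hv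
      · exact (Finset.mem_filter.1 hp).2
      · exact (hcl.fst_mem_iff p (Finset.mem_filter.1 hp).1).1 (Finset.mem_filter.1 hp).2
    · intro hv
      obtain ⟨p, hp, rfl | rfl⟩ := mem_endpoints.1 (hS.subset hv)
      · exact fst_mem_endpoints (mem_C p hp (.inl hv))
      · exact snd_mem_endpoints (mem_C p hp (.inr hv))
  refine ⟨C, ⟨Finset.filter_subset _ _, ?_, fun p hp q hq hpq => ?_, fun p hp hpC q hq hpq => ?_⟩,
    endpoints_C⟩
  · obtain ⟨v, hv⟩ := hS.nonempty
    obtain ⟨p, hp, -⟩ := mem_endpoints.1 (endpoints_C ▸ hv)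
    exact ⟨p, hp⟩
  · have h1 : q.1 ∈ S := endpoints_C ▸ fst_mem_endpoints hq
    have h2 : q.2 ∈ S := endpoints_C ▸ snd_mem_endpoints hq
    rcases hpq with h | h | h | h
    exacts [mem_C p hp (.inl (h ▸ h1)), mem_C p hp (.inl (h ▸ h2)),
      mem_C p hp (.inr (h ▸ h1)), mem_C p hp (.inr (h ▸ h2))]
  · obtain ⟨hqM, hqS⟩ := Finset.mem_filter.1 hq
    exact hpC (mem_C p hp (.inl (hcl.fst_mem_of_crosses q hqM p hp hpq.symm hqS)))

theorem image_endpoints_setOf_isComponent (M : Finset (ℕ × ℕ)) :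
    endpoints '' {C | IsComponent M C} = {S | Minimal (IsClosedVertexSet M) S} := by
  have isClosedVertexSet_iff :
      (fun S => ∃ C, IsPreSubdiagram M C ∧ endpoints C = S) = IsClosedVertexSet M :=
    funext fun S => propext ⟨fun ⟨_, hC, h⟩ => h ▸ hC.isClosedVertexSet,
      IsClosedVertexSet.exists_isPreSubdiagram⟩
  simp only [isComponent_iff_minimal, ← isClosedVertexSet_iff]
  exact image_monotone_setOfPred_minimal fun C D hC hD =>
    hC.endpoints_subset_endpoints_iff hD

theorem injOn_endpoints_setOf_isComponent (M : Finset (ℕ × ℕ)) :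
    Set.InjOn endpoints {C | IsComponent M C} := fun _ hC _ hD h =>
  ((hC.1.endpoints_subset_endpoints_iff hD.1).1 h.subset).antisymm
    ((hD.1.endpoints_subset_endpoints_iff hC.1).1 h.superset)

variable {f : ℕ → ℕ}

theorem isClosedVertexSet_iff_exists_image (hf : Set.InjOn f (endpoints M))
    (hM' : endpoints M' = (endpoints M).image f)
    (hcl : ∀ S, IsArcClosed (M : Set (ℕ × ℕ)) (f ⁻¹' S) ↔ IsArcClosed (M' : Set (ℕ × ℕ)) S) :
    IsClosedVertexSet M' S ↔ ∃ S₀, IsClosedVertexSet M S₀ ∧ S₀.image f = S := by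
  constructor
  · intro hS
    let S₀ := (endpoints M).filter fun v => f v ∈ S
    have image_S₀ : S₀.image f = S := by
      have subset_image : S ⊆ (endpoints M).image f := hM' ▸ hS.subset
      grind
    refine ⟨S₀, ⟨?_, Finset.filter_subset _ _, ?_⟩, image_S₀⟩
    · exact Finset.image_nonempty.1 (image_S₀ ▸ hS.nonempty)
    · refine ((hcl S).2 hS.isArcClosed).congr fun p hp => ?_
      simp only [S₀, Set.mem_preimage, Finset.mem_coe, Finset.mem_filter, fst_mem_endpoints hp,
        snd_mem_endpoints hp, true_and, and_self]
  · rintro ⟨S₀, hS₀, rfl⟩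
    refine ⟨hS₀.nonempty.image f, hM' ▸ Finset.image_subset_image hS₀.subset, ?_⟩
    refine (hcl _).1 (hS₀.isArcClosed.congr fun p hp => ?_)
    have mem_iff : ∀ v ∈ endpoints M, v ∈ S₀ ↔ f v ∈ S₀.image f := fun v hv => by
      rw [← Finset.mem_coe (s := S₀.image f), Finset.coe_image,
        hf.mem_image_iff (Finset.coe_subset.2 hS₀.subset) hv, Finset.mem_coe]
    exact ⟨mem_iff _ (fst_mem_endpoints hp), mem_iff _ (snd_mem_endpoints hp)⟩

theorem image_endpoints_setOf_isComponent_of_injOn (hf : Set.InjOn f (endpoints M))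
    (hM' : endpoints M' = (endpoints M).image f)
    (hcl : ∀ S, IsArcClosed (M : Set (ℕ × ℕ)) (f ⁻¹' S) ↔ IsArcClosed (M' : Set (ℕ × ℕ)) S) :
    endpoints '' {C | IsComponent M' C} =
      Finset.image f '' (endpoints '' {C | IsComponent M C}) := by
  have closed_iff : IsClosedVertexSet M' = fun S => ∃ S₀, IsClosedVertexSet M S₀ ∧ S₀.image f = S :=
    funext fun S => propext (isClosedVertexSet_iff_exists_image hf hM' hcl)
  rw [image_endpoints_setOf_isComponent, image_endpoints_setOf_isComponent, closed_iff]
  refine (image_monotone_setOfPred_minimal fun S T hS hT => ?_).symm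
  simp only [← Finset.coe_subset, Finset.coe_image]
  exact hf.image_subset_image_iff (Finset.coe_subset.2 hS.subset) (Finset.coe_subset.2 hT.subset)

end Component

section BallotBounds

variable {c s e : ℕ} {u v : ℕ → ℕ} {E : Set (ℕ × ℕ)} {p : ℕ × ℕ}

theorem IsNoncrossingMatching.fst_le_of_snd_eq
    (h : IsNoncrossingMatching (u '' Set.Iio c) (v '' Set.Iio c) E)
    (hu : StrictMonoOn u (Set.Iio c)) (hv : StrictMonoOn v (Set.Iio c)) (hs : s < c) (he : e < c)
    (hlt : ∀ k, s ≤ k → k < e → u (k + 1) < v k) (hend : e + 1 < c → v e < u (e + 1))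
    (hp : p ∈ E) (hpe : p.2 = v e) : p.1 ≤ u s := by
  obtain ⟨a, ha, hpa⟩ := h.fst_bijOn.mapsTo hp
  have hae : u a < v e := hpa ▸ hpe ▸ h.fst_lt_snd p hp
  by_contra! hcon
  rw [← hpa] at hcon
  have hsa : s < a := (hu.lt_iff_lt hs ha).1 hcon
  have le_of_lt_end : ∀ k < c, u k < v e → k ≤ e := fun k hk hke => by
    by_contra! hek
    exact (hend (by lia)).not_ge (((hu.le_iff_le (Set.mem_Iio.2 (by lia)) hk).2 hek).trans hke.le)
  have ha_le := le_of_lt_end a ha hae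
  -- Under `p` there would be at most `e - a` openers, but at least `e - a + 1` closers.
  have openers : u '' Set.Iio c ∩ Set.Ioo p.1 p.2 ⊆ u '' Set.Ioc a e := by
    rintro _ ⟨⟨k, hk, rfl⟩, h1, h2⟩
    exact ⟨k, ⟨(hu.lt_iff_lt ha hk).1 (hpa ▸ h1), le_of_lt_end k hk (hpe ▸ h2)⟩, rfl⟩
  have closers : v '' Set.Ico (a - 1) e ⊆ v '' Set.Iio c ∩ Set.Ioo p.1 p.2 := by
    rintro _ ⟨k, ⟨hk1, hk2⟩, rfl⟩
    have hkc : k ∈ Set.Iio c := hk2.trans he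
    refine ⟨⟨k, hkc, rfl⟩, hpa ▸ ?_, hpe ▸ hv hkc he hk2⟩
    exact ((hu.le_iff_le ha (Set.mem_Iio.2 (by lia))).2 (by lia)).trans_lt (hlt k (by lia) hk2)
  have hcard := (Set.encard_le_encard closers).trans
    ((h.encard_inter_Ioo hp).symm.le.trans (Set.encard_le_encard openers))
  rw [(hv.injOn.mono fun k hk => hk.2.trans he).encard_image] at hcard
  replace hcard := hcard.trans (Set.encard_image_le _ _)
  simp only [← Finset.coe_Ico, ← Finset.coe_Ioc, Set.encard_coe_eq_coe_finsetCard, Nat.card_Ico,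
    Nat.card_Ioc, Nat.cast_le] at hcard
  lia

theorem IsNoncrossingMatching.le_snd_of_fst_eq
    (h : IsNoncrossingMatching (u '' Set.Iio c) (v '' Set.Iio c) E)
    (hu : StrictMonoOn u (Set.Iio c)) (hv : StrictMonoOn v (Set.Iio c)) (hs : s < c) (he : e < c)
    (hlt : ∀ k, s ≤ k → k < e → u (k + 1) < v k) (hstart : ∀ k < s, v k < u s)
    (hp : p ∈ E) (hps : p.1 = u s) : v e ≤ p.2 := by
  obtain ⟨b, hb, hpb⟩ := h.snd_bijOn.mapsTo hp
  have hsb : u s < v b := hps ▸ hpb ▸ h.fst_lt_snd p hp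
  by_contra! hcon
  rw [← hpb] at hcon
  have hbe : b < e := (hv.lt_iff_lt hb he).1 hcon
  have le_of_start_lt : ∀ k, u s < v k → s ≤ k := fun k hk => by
    by_contra! hks
    exact (hstart k hks).not_gt hk
  have hs_le := le_of_start_lt b hsb
  -- Under `p` there would be at most `b - s` closers, but at least `b - s + 1` openers.
  have closers : v '' Set.Iio c ∩ Set.Ioo p.1 p.2 ⊆ v '' Set.Ico s b := by
    rintro _ ⟨⟨k, hk, rfl⟩, h1, h2⟩
    exact ⟨k, ⟨le_of_start_lt k (hps ▸ h1), (hv.lt_iff_lt hk hb).1 (hpb ▸ h2)⟩, rfl⟩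
  have openers : u '' Set.Ioc s (b + 1) ⊆ u '' Set.Iio c ∩ Set.Ioo p.1 p.2 := by
    rintro _ ⟨k, ⟨hk1, hk2⟩, rfl⟩
    have hkc : k ∈ Set.Iio c := Set.mem_Iio.2 (by lia)
    refine ⟨⟨k, hkc, rfl⟩, hps ▸ hu hs hkc hk1, hpb ▸ ?_⟩
    exact ((hu.le_iff_le hkc (Set.mem_Iio.2 (by lia))).2 hk2).trans_lt (hlt b hs_le hbe)
  have hcard := (Set.encard_le_encard openers).trans
    ((h.encard_inter_Ioo hp).le.trans (Set.encard_le_encard closers))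
  rw [(hu.injOn.mono fun k hk => Set.mem_Iio.2 (by have := hk.2; lia)).encard_image] at hcard
  replace hcard := hcard.trans (Set.encard_image_le _ _)
  simp only [← Finset.coe_Ico, ← Finset.coe_Ioc, Set.encard_coe_eq_coe_finsetCard, Nat.card_Ico,
    Nat.card_Ioc, Nat.cast_le] at hcard
  lia

end BallotBounds

section Greedy

/-- Consecutive rows `u`, `v` of length `c` of a tableau with distinct entries that increases along
rows and down columns. -/
structure IsStandardPair (c : ℕ) (u v : ℕ → ℕ) : Prop where
  fst_strictMonoOn : StrictMonoOn u (Set.Iio c)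
  snd_strictMonoOn : StrictMonoOn v (Set.Iio c)
  fst_lt_snd : ∀ j < c, u j < v j
  fst_ne_snd : ∀ j < c, ∀ k < c, u j ≠ v k

theorem IsStandardPair.add_one {c : ℕ} {u v : ℕ → ℕ} (h : IsStandardPair c u v) :
    IsStandardPair c (fun j => u j + 1) fun j => v j + 1 where
  fst_strictMonoOn _ hj _ hk hjk := Nat.succ_lt_succ (h.fst_strictMonoOn hj hk hjk)
  snd_strictMonoOn _ hj _ hk hjk := Nat.succ_lt_succ (h.snd_strictMonoOn hj hk hjk)
  fst_lt_snd j hj := Nat.succ_lt_succ (h.fst_lt_snd j hj)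
  fst_ne_snd j hj k hk hjk := h.fst_ne_snd j hj k hk (Nat.succ_injective hjk)

/-- The arcs of the greedy matching between rows `i` and `i + 1` of `T`. -/
def rowArcs (c : ℕ) (T : ℕ → ℕ → ℕ) (i : ℕ) : Set (ℕ × ℕ) :=
  (fun j => (T i (partnerCol c T i j), T (i + 1) j)) '' Set.Iio c

variable {r c i j k : ℕ} {T : ℕ → ℕ → ℕ}

theorem coe_mDiagram (r c : ℕ) (T : ℕ → ℕ → ℕ) :
    (mDiagram r c T : Set (ℕ × ℕ)) = ⋃ i : Fin (r - 1), rowArcs c T i := by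
  ext p
  simp only [mDiagram, rowArcs, Finset.coe_image, Finset.coe_product, Finset.coe_range,
    Set.mem_image, Set.mem_prod, Set.mem_Iio, Prod.exists, Set.mem_iUnion, Fin.exists_iff,
    exists_prop, and_assoc, exists_and_left]

theorem length_partnerList (c : ℕ) (T : ℕ → ℕ → ℕ) (i j : ℕ) :
    (partnerList c T i j).length = j := by
  induction j with
  | zero => rfl
  | succ j ih => simp [partnerList, ih]

theorem partnerList_succ (c : ℕ) (T : ℕ → ℕ → ℕ) (i j : ℕ) :
    partnerList c T i (j + 1) = partnerList c T i j ++ [partnerCol c T i j] := by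
  rw [partnerCol, partnerList, List.getD_append_right _ _ _ _ (length_partnerList c T i j).le]
  simp [length_partnerList]

theorem mem_partnerList {m : ℕ} :
    m ∈ partnerList c T i j ↔ ∃ k < j, partnerCol c T i k = m := by
  induction j with
  | zero => simp [partnerList]
  | succ j ih =>
    simp only [partnerList_succ, List.mem_append, ih, List.mem_singleton, Nat.lt_succ_iff_lt_or_eq]
    grind

theorem partnerCol_eq_sup (c : ℕ) (T : ℕ → ℕ → ℕ) (i j : ℕ) :
    partnerCol c T i j = ((Finset.range c).filter fun m =>
      T i m ≤ T (i + 1) j ∧ ∀ k < j, partnerCol c T i k ≠ m).sup id := by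
  have hlast := List.append_cancel_left (partnerList_succ c T i j).symm
  rw [List.singleton_inj.1 hlast, ← Nat.bot_eq_zero]
  change List.foldr (· ⊔ ·) ⊥ _ = _
  rw [List.foldr_sup_eq_sup_toFinset, List.toFinset_filter, List.toFinset_range]
  congr 1
  simp [mem_partnerList]

theorem isGreatest_partnerCol (h : IsStandardPair c (T i) (T (i + 1))) (hj : j < c) :
    IsGreatest {m | m < c ∧ T i m < T (i + 1) j ∧ ∀ k < j, partnerCol c T i k ≠ m}
      (partnerCol c T i j) := by
  let free := (Finset.range c).filter fun m =>
    T i m ≤ T (i + 1) j ∧ ∀ k < j, partnerCol c T i k ≠ m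
  have mem_free : ∀ m, m ∈ free ↔
      m < c ∧ T i m < T (i + 1) j ∧ ∀ k < j, partnerCol c T i k ≠ m := by
    intro m
    simp only [free, Finset.mem_filter, Finset.mem_range]
    exact and_congr_right fun hm => and_congr_left' (h.fst_ne_snd m hm j hj).le_iff_lt
  -- Only `j` columns are used before step `j`, so one of the columns `0, …, j` is free.
  have free_nonempty : free.Nonempty := by
    obtain ⟨m, hm, hfree⟩ := Finset.exists_mem_notMem_of_card_lt_card
      (s := (Finset.range j).image (partnerCol c T i)) (t := Finset.range (j + 1))
      (Finset.card_image_le.trans_lt (by simp))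
    have hmj := Finset.mem_range_succ_iff.1 hm
    refine ⟨m, (mem_free m).2 ⟨hmj.trans_lt hj, ?_, fun k hk hkm =>
      hfree (Finset.mem_image.2 ⟨k, Finset.mem_range.2 hk, hkm⟩)⟩⟩
    exact (h.fst_strictMonoOn.monotoneOn (Set.mem_Iio.2 (hmj.trans_lt hj)) hj hmj).trans_lt
      (h.fst_lt_snd j hj)
  have hsup : partnerCol c T i j = free.sup id := partnerCol_eq_sup c T i j
  obtain ⟨m, hm, hmax⟩ := Finset.exists_mem_eq_sup free free_nonempty id
  rw [hsup]
  exact ⟨(mem_free _).1 (hmax ▸ hm), fun m hm => Finset.le_sup (f := id) ((mem_free m).2 hm)⟩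

theorem bijOn_partnerCol (h : IsStandardPair c (T i) (T (i + 1))) :
    Set.BijOn (partnerCol c T i) (Set.Iio c) (Set.Iio c) := by
  have hmaps : Set.MapsTo (partnerCol c T i) (Set.Iio c) (Set.Iio c) :=
    fun _ hj => (isGreatest_partnerCol h hj).1.1
  have hinj : Set.InjOn (partnerCol c T i) (Set.Iio c) := by
    intro j hj k hk hjk
    by_contra hne
    rcases lt_or_gt_of_ne hne with hlt | hlt
    · exact (isGreatest_partnerCol h hk).1.2.2 j hlt hjk
    · exact (isGreatest_partnerCol h hj).1.2.2 k hlt hjk.symm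
  refine ⟨hmaps, hinj, ?_⟩
  rw [← Finset.coe_range] at hmaps hinj ⊢
  exact Finset.surjOn_of_injOn_of_card_le _ hmaps hinj le_rfl

theorem isNoncrossingMatching_rowArcs (h : IsStandardPair c (T i) (T (i + 1))) :
    IsNoncrossingMatching (T i '' Set.Iio c) (T (i + 1) '' Set.Iio c) (rowArcs c T i) := by
  have bijOn_comp_arc : ∀ (f : ℕ × ℕ → ℕ) {B : Set ℕ},
      Set.BijOn (fun j => f (T i (partnerCol c T i j), T (i + 1) j)) (Set.Iio c) B →
      Set.BijOn f (rowArcs c T i) B := fun f B hf => by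
    refine ⟨?_, hf.injOn.image_of_comp, ?_⟩
    · rintro _ ⟨j, hj, rfl⟩
      exact hf.mapsTo hj
    · intro b hb
      obtain ⟨j, hj, rfl⟩ := hf.surjOn hb
      exact ⟨_, ⟨j, hj, rfl⟩, rfl⟩
  have not_crosses_of_lt : ∀ j < c, ∀ k < c, T i (partnerCol c T i j) < T i (partnerCol c T i k) →
      T i (partnerCol c T i k) < T (i + 1) j → ¬ T (i + 1) j < T (i + 1) k := by
    intro j hj k hk h1 h2 h3
    have hjk := (h.snd_strictMonoOn.lt_iff_lt hj hk).1 h3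
    have hpk := isGreatest_partnerCol h hk
    refine h1.not_ge (h.fst_strictMonoOn.monotoneOn hpk.1.1 (isGreatest_partnerCol h hj).1.1 ?_)
    exact (isGreatest_partnerCol h hj).2 ⟨hpk.1.1, h2, fun l hl => hpk.1.2.2 l (hl.trans hjk)⟩
  constructor
  · exact bijOn_comp_arc Prod.fst
      (h.fst_strictMonoOn.injOn.bijOn_image.comp (bijOn_partnerCol h))
  · exact bijOn_comp_arc Prod.snd h.snd_strictMonoOn.injOn.bijOn_image
  · rintro _ ⟨j, hj, rfl⟩
    exact (isGreatest_partnerCol h hj).1.2.1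
  · rintro _ ⟨j, hj, rfl⟩ _ ⟨k, hk, rfl⟩ (⟨h1, h2, h3⟩ | ⟨h1, h2, h3⟩)
    exacts [not_crosses_of_lt j hj k hk h1 h2 h3, not_crosses_of_lt k hk j hj h1 h2 h3]

theorem partnerCol_add_one (c : ℕ) (T : ℕ → ℕ → ℕ) (i j : ℕ) :
    partnerCol c (fun i j => T i j + 1) i j = partnerCol c T i j := by
  have partnerList_add_one : ∀ k,
      partnerList c (fun i j => T i j + 1) i k = partnerList c T i k := fun k => by
    induction k with
    | zero => rfl
    | succ k ih => simp only [partnerList, ih, Nat.add_le_add_iff_right]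
  rw [partnerCol, partnerCol, partnerList_add_one]

theorem coe_mDiagram_add_one (r c : ℕ) (T : ℕ → ℕ → ℕ) :
    (mDiagram r c fun i j => T i j + 1 : Set (ℕ × ℕ)) =
      Prod.map (· + 1) (· + 1) '' (mDiagram r c T : Set (ℕ × ℕ)) := by
  simp only [mDiagram, partnerCol_add_one, Finset.coe_image, Set.image_image, Prod.map_apply]

theorem isArcClosed_mDiagram_add_one (r c : ℕ) (T : ℕ → ℕ → ℕ) (S : Set ℕ) :
    IsArcClosed (mDiagram r c fun i j => T i j + 1 : Set (ℕ × ℕ)) S ↔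
      IsArcClosed (mDiagram r c T : Set (ℕ × ℕ)) ((· + 1) ⁻¹' S) := by
  rw [coe_mDiagram_add_one]
  have crosses_add_one : ∀ p q : ℕ × ℕ,
      Crosses (p.map (· + 1) (· + 1)) (q.map (· + 1) (· + 1)) ↔ Crosses p q := by simp [Crosses]
  constructor
  · exact fun h => ⟨fun p hp => h.fst_mem_iff _ ⟨p, hp, rfl⟩, fun p hp q hq hpq =>
      h.fst_mem_of_crosses _ ⟨p, hp, rfl⟩ _ ⟨q, hq, rfl⟩ ((crosses_add_one p q).2 hpq)⟩
  · rintro h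
    constructor
    · rintro _ ⟨p, hp, rfl⟩
      exact h.fst_mem_iff p hp
    · rintro _ ⟨p, hp, rfl⟩ _ ⟨q, hq, rfl⟩ hpq
      exact h.fst_mem_of_crosses p hp q hq ((crosses_add_one p q).1 hpq)

end Greedy

section Tableau

variable {r c i j : ℕ} {T : ℕ → ℕ → ℕ}

namespace IsRectSYT

theorem row_strictMonoOn (hT : IsRectSYT r c T) (hi : i < r) : StrictMonoOn (T i) (Set.Iio c) :=
  strictMonoOn_of_lt_add_one Set.ordConnected_Iio fun j _ _ hj => hT.1 i j hi hj

theorem le_of_le (hT : IsRectSYT r c T) {i' j' : ℕ} (hi : i ≤ i') (hj : j ≤ j') (hi' : i' < r)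
    (hj' : j' < c) : T i j ≤ T i' j' := by
  refine ((hT.row_strictMonoOn (hi.trans_lt hi')).monotoneOn (hj.trans_lt hj') hj' hj).trans ?_
  have col_strictMonoOn : StrictMonoOn (fun i => T i j') (Set.Iio r) :=
    strictMonoOn_of_lt_add_one Set.ordConnected_Iio fun i _ _ hi => hT.2.1 i j' hi hj'
  exact col_strictMonoOn.monotoneOn (hi.trans_lt hi') hi' hi

theorem injOn (hT : IsRectSYT r c T) :
    Set.InjOn (fun p : ℕ × ℕ => T p.1 p.2) (Set.Iio r ×ˢ Set.Iio c) := by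
  have hmaps : Set.MapsTo (fun p : ℕ × ℕ => T p.1 p.2)
      (Finset.range r ×ˢ Finset.range c : Finset (ℕ × ℕ)) (Finset.Icc 1 (r * c)) := by
    intro p hp
    simp only [Finset.coe_product, Finset.coe_range] at hp
    exact Finset.mem_coe.2 (Finset.mem_Icc.2 (hT.2.2.1 _ _ hp.1 hp.2))
  have hsurj : Set.SurjOn (fun p : ℕ × ℕ => T p.1 p.2)
      (Finset.range r ×ˢ Finset.range c : Finset (ℕ × ℕ)) (Finset.Icc 1 (r * c)) := by
    intro v hv
    obtain ⟨hv1, hvn⟩ := Finset.mem_Icc.1 (Finset.mem_coe.1 hv)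
    obtain ⟨i, j, hi, hj, rfl⟩ := hT.2.2.2 v hv1 hvn
    exact ⟨(i, j), by simp [hi, hj], rfl⟩
  simpa only [Finset.coe_product, Finset.coe_range] using
    Finset.injOn_of_surjOn_of_card_le _ hmaps hsurj (by simp)

theorem eq_of_entry_eq (hT : IsRectSYT r c T) {i' j' : ℕ} (hi : i < r) (hj : j < c) (hi' : i' < r)
    (hj' : j' < c) (h : T i j = T i' j') : i = i' ∧ j = j' :=
  Prod.ext_iff.1 (hT.injOn (Set.mk_mem_prod hi hj) (Set.mk_mem_prod hi' hj') h)

theorem isStandardPair (hT : IsRectSYT r c T) (hi : i + 1 < r) :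
    IsStandardPair c (T i) (T (i + 1)) where
  fst_strictMonoOn := hT.row_strictMonoOn (by lia)
  snd_strictMonoOn := hT.row_strictMonoOn hi
  fst_lt_snd j hj := hT.2.1 i j hi hj
  fst_ne_snd j hj k hk h := by
    have := (hT.eq_of_entry_eq (by lia) hj hi hk h).1
    lia

theorem isNoncrossingMatching_rowArcs (hT : IsRectSYT r c T) (k : Fin (r - 1)) :
    IsNoncrossingMatching (T k '' Set.Iio c) (T (k + 1) '' Set.Iio c) (rowArcs c T k) :=
  _root_.isNoncrossingMatching_rowArcs (hT.isStandardPair (by lia))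

theorem corner_eq_one (hT : IsRectSYT r c T) (hr : 0 < r) (hc : 0 < c) : T 0 0 = 1 := by
  obtain ⟨i, j, hi, hj, hij⟩ := hT.2.2.2 1 le_rfl (Nat.mul_pos hr hc)
  exact ((hT.le_of_le i.zero_le j.zero_le hi hj).trans hij.le).antisymm (hT.2.2.1 0 0 hr hc).1

theorem endpoints_mDiagram_subset (hT : IsRectSYT r c T) :
    endpoints (mDiagram r c T) ⊆ Finset.Icc 1 (r * c) := by
  intro v hv
  obtain ⟨p, hp, hpv⟩ := mem_endpoints.1 hv
  rw [← Finset.mem_coe, coe_mDiagram, Set.mem_iUnion] at hp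
  obtain ⟨k, hp⟩ := hp
  rw [Finset.mem_Icc]
  rcases hpv with rfl | rfl
  · obtain ⟨j, hj, hp⟩ := (hT.isNoncrossingMatching_rowArcs k).fst_bijOn.mapsTo hp
    exact hp ▸ hT.2.2.1 k j (by lia) hj
  · obtain ⟨j, hj, hp⟩ := (hT.isNoncrossingMatching_rowArcs k).snd_bijOn.mapsTo hp
    exact hp ▸ hT.2.2.1 (k + 1) j (by lia) hj

theorem endpoints_mDiagram (hT : IsRectSYT r c T) (hr : 1 < r) :
    endpoints (mDiagram r c T) = Finset.Icc 1 (r * c) := by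
  refine hT.endpoints_mDiagram_subset.antisymm fun v hv => ?_
  have mem_of_rowArcs : ∀ (k : Fin (r - 1)) (p), p ∈ rowArcs c T k → p ∈ mDiagram r c T :=
    fun k p hp => by
      rw [← Finset.mem_coe, coe_mDiagram]
      exact Set.mem_iUnion_of_mem k hp
  obtain ⟨hv1, hvn⟩ := Finset.mem_Icc.1 hv
  obtain ⟨i, j, hi, hj, rfl⟩ := hT.2.2.2 v hv1 hvn
  rcases i with _ | i
  · obtain ⟨p, hp, hpj⟩ := (hT.isNoncrossingMatching_rowArcs ⟨0, by lia⟩).fst_bijOn.surjOn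
      (Set.mem_image_of_mem _ hj)
    exact hpj ▸ fst_mem_endpoints (mem_of_rowArcs _ _ hp)
  · obtain ⟨p, hp, hpj⟩ := (hT.isNoncrossingMatching_rowArcs ⟨i, by lia⟩).snd_bijOn.surjOn
      (Set.mem_image_of_mem _ hj)
    exact hpj ▸ snd_mem_endpoints (mem_of_rowArcs _ _ hp)

end IsRectSYT

end Tableau

section Promotion

/-- The column in which the sliding path of the empty box enters row `i`; for `i = r` it is the
last column, where the path ends. So row `i` of the path occupies the columns from
`slideCol r c T i` to `slideCol r c T (i + 1)`. -/
noncomputable def slideCol (r c : ℕ) (T : ℕ → ℕ → ℕ) : ℕ → ℕ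
  | 0 => 0
  | i + 1 => sInf {e | slideCol r c T i ≤ e ∧ (e + 1 < c → i + 1 < r ∧ T (i + 1) e < T i (e + 1))}

/-- The entry that leaves row `i` upwards under promotion, namely the one at which the sliding path
enters that row. For `i = r` it is the new entry put in the final empty box, before all entries are
decremented. -/
noncomputable def slideEntry (r c : ℕ) (T : ℕ → ℕ → ℕ) (i : ℕ) : ℕ :=
  if i < r then T i (slideCol r c T i) else r * c + 1

variable {r c i j : ℕ} {T : ℕ → ℕ → ℕ}

theorem slideCol_succ_mem (r c : ℕ) (T : ℕ → ℕ → ℕ) (i : ℕ) :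
    slideCol r c T (i + 1) ∈ {e | slideCol r c T i ≤ e ∧
      (e + 1 < c → i + 1 < r ∧ T (i + 1) e < T i (e + 1))} :=
  Nat.sInf_mem ⟨max (slideCol r c T i) c, le_max_left _ _, fun h => by lia⟩

theorem slideCol_le_slideCol_succ (r c : ℕ) (T : ℕ → ℕ → ℕ) (i : ℕ) :
    slideCol r c T i ≤ slideCol r c T (i + 1) :=
  (slideCol_succ_mem r c T i).1

theorem slideCol_lt (r : ℕ) (hc : 0 < c) (T : ℕ → ℕ → ℕ) (i : ℕ) : slideCol r c T i < c := by
  induction i with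
  | zero => exact hc
  | succ i ih =>
    have : slideCol r c T (i + 1) ≤ c - 1 := Nat.sInf_le ⟨by lia, fun h => by lia⟩
    lia

theorem slideCol_last (hr : 0 < r) (hc : 0 < c) (T : ℕ → ℕ → ℕ) : slideCol r c T r = c - 1 := by
  obtain ⟨i, rfl⟩ := Nat.exists_eq_add_one.2 hr
  have := (slideCol_succ_mem (i + 1) c T i).2
  have := slideCol_lt (i + 1) hc T (i + 1)
  lia

theorem lt_of_slideCol_succ_add_one_lt (h : slideCol r c T (i + 1) + 1 < c) :
    i + 1 < r ∧ T (i + 1) (slideCol r c T (i + 1)) < T i (slideCol r c T (i + 1) + 1) :=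
  (slideCol_succ_mem r c T i).2 h

theorem le_of_mem_Ico_slideCol (hj : j ∈ Set.Ico (slideCol r c T i) (slideCol r c T (i + 1))) :
    j + 1 < c ∧ (i + 1 < r → T i (j + 1) ≤ T (i + 1) j) := by
  have hnot := Nat.notMem_of_lt_sInf hj.2
  simp only [Set.mem_ofPred_eq, hj.1, true_and, Classical.not_imp, not_and, not_lt] at hnot
  exact hnot

theorem slideNext_of_mem_Ico
    (hj : j ∈ Set.Ico (slideCol r c T i) (slideCol r c T (i + 1))) :
    slideNext r c T (i, j) = (i, j + 1) := by
  obtain ⟨hjc, hle⟩ := le_of_mem_Ico_slideCol hj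
  by_cases hir : i + 1 < r
  · simp [slideNext, hir, hjc, hle hir]
  · simp [slideNext, hir, hjc]

theorem slideNext_slideCol_succ (hi : i + 1 < r) :
    slideNext r c T (i, slideCol r c T (i + 1)) = (i + 1, slideCol r c T (i + 1)) := by
  by_cases hjc : slideCol r c T (i + 1) + 1 < c
  · simp [slideNext, hi, hjc, (lt_of_slideCol_succ_add_one_lt hjc).2]
  · simp [slideNext, hi, hjc]

theorem slideNext_last (hr : 0 < r) (hc : 0 < c) (T : ℕ → ℕ → ℕ) :
    slideNext r c T (r - 1, c - 1) = (r - 1, c - 1) := by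
  simp [slideNext, Nat.sub_add_cancel hr, Nat.sub_add_cancel hc]

theorem slidePath_add (hi : i < r)
    (hj : j ∈ Set.Icc (slideCol r c T i) (slideCol r c T (i + 1))) :
    slidePath r c T (i + j) = (i, j) := by
  have slide_right : ∀ i, slidePath r c T (i + slideCol r c T i) = (i, slideCol r c T i) →
      ∀ j ∈ Set.Icc (slideCol r c T i) (slideCol r c T (i + 1)),
        slidePath r c T (i + j) = (i, j) := by
    rintro i hstart j ⟨hj, hj'⟩
    induction j, hj using Nat.le_induction with
    | base => exact hstart
    | succ j hj ih =>
      rw [← add_assoc, slidePath, ih (by lia), slideNext_of_mem_Ico ⟨hj, hj'⟩]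
  have hstart : slidePath r c T (i + slideCol r c T i) = (i, slideCol r c T i) := by
    clear hj
    induction i with
    | zero => rfl
    | succ i ih =>
      rw [add_right_comm, slidePath, slide_right i (ih (by lia)) _
        ⟨slideCol_le_slideCol_succ r c T i, le_rfl⟩, slideNext_slideCol_succ hi]
  exact slide_right i hstart j hj

theorem slidePath_last (hr : 0 < r) (hc : 0 < c) (T : ℕ → ℕ → ℕ) :
    slidePath r c T (r + c) = (r - 1, c - 1) := by
  have hle := slideCol_le_slideCol_succ r c T (r - 1)
  rw [Nat.sub_add_cancel hr, slideCol_last hr hc] at hle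
  have hend : slidePath r c T (r - 1 + (c - 1)) = (r - 1, c - 1) :=
    slidePath_add (by lia) ⟨hle, by rw [Nat.sub_add_cancel hr, slideCol_last hr hc]⟩
  rw [show r + c = r - 1 + (c - 1) + 1 + 1 by lia, slidePath, slidePath, hend,
    slideNext_last hr hc, slideNext_last hr hc]

theorem exists_slidePath_eq_iff (hr : 0 < r) (hc : 0 < c) :
    (∃ k, slidePath r c T k = (i, j)) ↔
      i < r ∧ j ∈ Set.Icc (slideCol r c T i) (slideCol r c T (i + 1)) := by
  refine ⟨?_, fun h => ⟨i + j, slidePath_add h.1 h.2⟩⟩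
  rintro ⟨k, hk⟩
  induction k generalizing i j with
  | zero =>
    obtain ⟨rfl, rfl⟩ := Prod.mk.inj hk
    exact ⟨hr, le_rfl, Nat.zero_le _⟩
  | succ k ih =>
    rcases hprev : slidePath r c T k with ⟨i', j'⟩
    obtain ⟨hi', hj'⟩ := ih hprev
    rw [slidePath, hprev] at hk
    rcases hj'.2.lt_or_eq with hlt | rfl
    · rw [slideNext_of_mem_Ico ⟨hj'.1, hlt⟩] at hk
      obtain ⟨rfl, rfl⟩ := Prod.mk.inj hk
      exact ⟨hi', hj'.1.trans (Nat.le_succ _), hlt⟩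
    · by_cases hir : i' + 1 < r
      · rw [slideNext_slideCol_succ hir] at hk
        obtain ⟨rfl, rfl⟩ := Prod.mk.inj hk
        exact ⟨hir, le_rfl, slideCol_le_slideCol_succ r c T _⟩
      · obtain rfl : r = i' + 1 := by lia
        have hlast := slideNext_last hr hc T
        rw [slideCol_last hr hc] at hk hj'
        rw [Nat.add_sub_cancel] at hlast
        obtain ⟨rfl, rfl⟩ := Prod.mk.inj (hlast.symm.trans hk)
        exact ⟨hi', hj'.1, (slideCol_last hr hc T).ge⟩

theorem slideEntry_of_lt (hi : i < r) : slideEntry r c T i = T i (slideCol r c T i) := if_pos hi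

theorem slideEntry_self (r c : ℕ) (T : ℕ → ℕ → ℕ) : slideEntry r c T r = r * c + 1 :=
  if_neg (lt_irrefl r)

theorem slideEntry_succ_lt (h : slideCol r c T (i + 1) + 1 < c) :
    slideEntry r c T (i + 1) < T i (slideCol r c T (i + 1) + 1) := by
  obtain ⟨hir, hlt⟩ := lt_of_slideCol_succ_add_one_lt h
  rwa [slideEntry_of_lt hir]

theorem promote_of_slidePath_eq {k : ℕ} (hk : slidePath r c T k = (i, j))
    (hlast : (i, j) ≠ slidePath r c T (r + c)) :
    promote r c T i j = T (slideNext r c T (i, j)).1 (slideNext r c T (i, j)).2 - 1 := by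
  classical
  have hex : ∃ k, slidePath r c T k = (i, j) := ⟨k, hk⟩
  rw [promote, if_neg hlast, dif_pos hex, slidePath, Nat.find_spec hex]

namespace IsRectSYT

theorem slideEntry_zero (hT : IsRectSYT r c T) (hr : 0 < r) (hc : 0 < c) :
    slideEntry r c T 0 = 1 := by
  rw [slideEntry_of_lt hr]
  exact hT.corner_eq_one hr hc

theorem slideEntry_le (hT : IsRectSYT r c T) (hc : 0 < c) (i : ℕ) :
    slideEntry r c T i ≤ r * c + 1 := by
  by_cases hi : i < r
  · rw [slideEntry_of_lt hi]
    exact (hT.2.2.1 i _ hi (slideCol_lt r hc T i)).2.trans (Nat.le_succ _)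
  · exact (if_neg hi).le

theorem lt_slideEntry_succ (hT : IsRectSYT r c T) (hi : i < r) (hc : 0 < c) :
    T i (slideCol r c T (i + 1)) < slideEntry r c T (i + 1) := by
  have hcol := slideCol_lt r hc T (i + 1)
  by_cases hir : i + 1 < r
  · rw [slideEntry_of_lt hir]
    exact hT.2.1 i _ hir hcol
  · rw [show i + 1 = r by lia, slideEntry_self]
    exact Nat.lt_succ_of_le (hT.2.2.1 i _ hi (slideCol_lt r hc T r)).2

theorem slideEntry_lt_slideEntry_succ (hT : IsRectSYT r c T) (hi : i < r) (hc : 0 < c) :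
    slideEntry r c T i < slideEntry r c T (i + 1) := by
  rw [slideEntry_of_lt hi]
  exact (hT.le_of_le le_rfl (slideCol_le_slideCol_succ r c T i) hi (slideCol_lt r hc T _)).trans_lt
    (hT.lt_slideEntry_succ hi hc)

theorem entry_lt_of_mem_Ico_slideCol (hT : IsRectSYT r c T) (hi : i + 1 < r)
    (hj : j ∈ Set.Ico (slideCol r c T i) (slideCol r c T (i + 1))) :
    T i (j + 1) < T (i + 1) j := by
  obtain ⟨hjc, hle⟩ := le_of_mem_Ico_slideCol hj
  exact (hle hi).lt_of_ne ((hT.isStandardPair hi).fst_ne_snd _ hjc _ (by lia))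

theorem promote_add_one_of_mem_Ico (hT : IsRectSYT r c T) (hi : i < r)
    (hj : j ∈ Set.Ico (slideCol r c T i) (slideCol r c T (i + 1))) :
    promote r c T i j + 1 = T i (j + 1) := by
  have hjc := (le_of_mem_Ico_slideCol hj).1
  have hne : (i, j) ≠ slidePath r c T (r + c) := by
    rw [slidePath_last (by lia) (by lia)]
    exact fun he => by have := congrArg Prod.snd he; lia
  rw [promote_of_slidePath_eq (slidePath_add hi (Set.Ico_subset_Icc_self hj)) hne,
    slideNext_of_mem_Ico hj]
  exact Nat.sub_add_cancel (hT.2.2.1 i (j + 1) hi hjc).1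

theorem promote_add_one_slideCol_succ (hT : IsRectSYT r c T) (hi : i < r) (hc : 0 < c) :
    promote r c T i (slideCol r c T (i + 1)) + 1 = slideEntry r c T (i + 1) := by
  have hlast := slidePath_last (by lia : 0 < r) hc T
  by_cases hir : i + 1 < r
  · have hne : (i, slideCol r c T (i + 1)) ≠ slidePath r c T (r + c) := by
      rw [hlast]
      exact fun he => by have := congrArg Prod.fst he; lia
    rw [promote_of_slidePath_eq (slidePath_add hi ⟨slideCol_le_slideCol_succ r c T i, le_rfl⟩) hne,
      slideNext_slideCol_succ hir, slideEntry_of_lt hir]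
    exact Nat.sub_add_cancel (hT.2.2.1 (i + 1) _ hir (slideCol_lt r hc T _)).1
  · obtain rfl : r = i + 1 := by lia
    rw [Nat.add_sub_cancel] at hlast
    rw [slideEntry_self, slideCol_last (by lia) hc, promote, if_pos hlast.symm]

theorem promote_add_one_of_notMem_Icc (hT : IsRectSYT r c T) (hi : i < r) (hjc : j < c)
    (hj : j ∉ Set.Icc (slideCol r c T i) (slideCol r c T (i + 1))) :
    promote r c T i j + 1 = T i j := by
  have hnot : ¬ ∃ k, slidePath r c T k = (i, j) := fun h =>
    hj ((exists_slidePath_eq_iff (by lia) (by lia)).1 h).2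
  rw [promote, if_neg fun h => hnot ⟨_, h.symm⟩, dif_neg hnot]
  exact Nat.sub_add_cancel (hT.2.2.1 i j hi hjc).1

theorem lt_promote_add_one (hT : IsRectSYT r c T) (hi : i < r) (hjc : j < c)
    (hj : j ∈ Set.Icc (slideCol r c T i) (slideCol r c T (i + 1))) :
    T i j < promote r c T i j + 1 := by
  rcases hj.2.lt_or_eq with hlt | rfl
  · rw [hT.promote_add_one_of_mem_Ico hi ⟨hj.1, hlt⟩]
    exact hT.1 i j hi (le_of_mem_Ico_slideCol ⟨hj.1, hlt⟩).1
  · rw [hT.promote_add_one_slideCol_succ hi (by lia)]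
    exact hT.lt_slideEntry_succ hi (by lia)

theorem le_promote_add_one (hT : IsRectSYT r c T) (hi : i < r) (hjc : j < c) :
    T i j ≤ promote r c T i j + 1 := by
  by_cases hj : j ∈ Set.Icc (slideCol r c T i) (slideCol r c T (i + 1))
  · exact (hT.lt_promote_add_one hi hjc hj).le
  · exact (hT.promote_add_one_of_notMem_Icc hi hjc hj).ge

theorem row_promote_add_one (hT : IsRectSYT r c T) (hi : i < r) (hc : 0 < c) :
    (fun j => promote r c T i j + 1) '' Set.Iio c =
      insert (slideEntry r c T (i + 1)) (T i '' Set.Iio c \ {slideEntry r c T i}) := by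
  have hinj := (hT.row_strictMonoOn hi).injOn
  have hcol := slideCol_lt r hc T i
  rw [slideEntry_of_lt hi, ← Set.image_singleton, ← hinj.image_sdiff_subset
    (Set.singleton_subset_iff.2 hcol)]
  ext v
  constructor
  · rintro ⟨j, hjc, rfl⟩
    dsimp only
    by_cases hj : j ∈ Set.Icc (slideCol r c T i) (slideCol r c T (i + 1))
    · rcases hj.2.lt_or_eq with hlt | rfl
      · rw [hT.promote_add_one_of_mem_Ico hi ⟨hj.1, hlt⟩]
        have hjc' := (le_of_mem_Ico_slideCol ⟨hj.1, hlt⟩).1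
        exact .inr ⟨j + 1, ⟨hjc', (Nat.lt_succ_of_le hj.1).ne'⟩, rfl⟩
      · exact .inl (hT.promote_add_one_slideCol_succ hi hc)
    · rw [hT.promote_add_one_of_notMem_Icc hi hjc hj]
      have hne : j ≠ slideCol r c T i := fun he =>
        hj ⟨he.ge, he.le.trans (slideCol_le_slideCol_succ r c T i)⟩
      exact .inr ⟨j, ⟨hjc, hne⟩, rfl⟩
  · rintro (rfl | ⟨j, ⟨hjc, hne⟩, rfl⟩)
    · exact ⟨_, slideCol_lt r hc T (i + 1), hT.promote_add_one_slideCol_succ hi hc⟩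
    · by_cases hj : j ∈ Set.Icc (slideCol r c T i) (slideCol r c T (i + 1))
      · have hlt : slideCol r c T i < j := lt_of_le_of_ne hj.1 fun he => hne he.symm
        obtain ⟨j, rfl⟩ := Nat.exists_eq_add_one.2 (Nat.zero_lt_of_lt hlt)
        exact ⟨j, (Nat.lt_succ_self j).trans hjc,
          hT.promote_add_one_of_mem_Ico hi ⟨Nat.lt_succ_iff.1 hlt, hj.2⟩⟩
      · exact ⟨j, hjc, hT.promote_add_one_of_notMem_Icc hi hjc hj⟩

theorem mem_row_promote_add_one_iff (hT : IsRectSYT r c T) (hi : i < r) (hc : 0 < c) {v : ℕ}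
    (hv : ∀ k ≤ r, v ≠ slideEntry r c T k) :
    v ∈ (fun j => promote r c T i j + 1) '' Set.Iio c ↔ v ∈ T i '' Set.Iio c := by
  rw [hT.row_promote_add_one hi hc]
  simp [hv i hi.le, hv (i + 1) hi]

theorem promote_lt_promote_right (hT : IsRectSYT r c T) (hi : i < r) (hjc : j + 1 < c) :
    promote r c T i j < promote r c T i (j + 1) := by
  rw [← Nat.add_lt_add_iff_right (k := 1)]
  have hle := hT.le_promote_add_one hi hjc
  by_cases hj : j ∈ Set.Icc (slideCol r c T i) (slideCol r c T (i + 1))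
  · rcases hj.2.lt_or_eq with hlt | rfl
    · rw [hT.promote_add_one_of_mem_Ico hi ⟨hj.1, hlt⟩]
      exact hT.lt_promote_add_one hi hjc ⟨hj.1.trans j.le_succ, hlt⟩
    · rw [hT.promote_add_one_slideCol_succ hi (by lia)]
      exact (slideEntry_succ_lt hjc).trans_le hle
  · rw [hT.promote_add_one_of_notMem_Icc hi (by lia) hj]
    exact (hT.1 i j hi hjc).trans_le hle

theorem promote_lt_promote_down (hT : IsRectSYT r c T) (hi : i + 1 < r) (hjc : j < c) :
    promote r c T i j < promote r c T (i + 1) j := by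
  rw [← Nat.add_lt_add_iff_right (k := 1)]
  have hle := hT.le_promote_add_one hi hjc
  by_cases hj : j ∈ Set.Icc (slideCol r c T i) (slideCol r c T (i + 1))
  · rcases hj.2.lt_or_eq with hlt | rfl
    · rw [hT.promote_add_one_of_mem_Ico (by lia) ⟨hj.1, hlt⟩]
      exact (hT.entry_lt_of_mem_Ico_slideCol hi ⟨hj.1, hlt⟩).trans_le hle
    · rw [hT.promote_add_one_slideCol_succ (by lia) (by lia), slideEntry_of_lt hi]
      exact hT.lt_promote_add_one hi hjc ⟨le_rfl, slideCol_le_slideCol_succ r c T _⟩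
  · rw [hT.promote_add_one_of_notMem_Icc (by lia) hjc hj]
    exact (hT.2.1 i j hi hjc).trans_le hle

theorem promote_mem_Icc (hT : IsRectSYT r c T) (hi : i < r) (hjc : j < c) :
    1 ≤ promote r c T i j ∧ promote r c T i j ≤ r * c := by
  have hc : 0 < c := by lia
  constructor
  · rw [← Nat.add_le_add_iff_right (n := 1)]
    rcases (hT.2.2.1 i j hi hjc).1.lt_or_eq with hgt | hone
    · exact hgt.trans_le (hT.le_promote_add_one hi hjc)
    · obtain ⟨rfl, rfl⟩ := hT.eq_of_entry_eq hi hjc (by lia) hc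
        (hone.symm.trans (hT.corner_eq_one (by lia) hc).symm)
      have hlt := hT.lt_promote_add_one hi hjc ⟨le_rfl, Nat.zero_le _⟩
      rwa [← hone] at hlt
  · rw [← Nat.add_le_add_iff_right (n := 1)]
    have hmem := Set.mem_image_of_mem (fun j => promote r c T i j + 1) (Set.mem_Iio.2 hjc)
    rw [hT.row_promote_add_one hi hc] at hmem
    rcases hmem with he | ⟨⟨k, hk, he⟩, -⟩
    · exact he.le.trans (hT.slideEntry_le hc _)
    · exact he.ge.trans ((hT.2.2.1 i k hi hk).2.trans (Nat.le_succ _))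

theorem exists_promote_eq (hT : IsRectSYT r c T) {v : ℕ} (hv1 : 1 ≤ v) (hvn : v ≤ r * c) :
    ∃ i j, i < r ∧ j < c ∧ promote r c T i j = v := by
  have hr : 0 < r := Nat.pos_of_mul_pos_right (hv1.trans hvn)
  have hc : 0 < c := Nat.pos_of_mul_pos_left (hv1.trans hvn)
  suffices h : ∃ i < r, v + 1 ∈ (fun j => promote r c T i j + 1) '' Set.Iio c by
    obtain ⟨i, hi, j, hj, he⟩ := h
    exact ⟨i, j, hi, hj, Nat.succ_injective he⟩
  by_cases hslide : ∃ i < r, v + 1 = slideEntry r c T (i + 1)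
  · obtain ⟨i, hi, he⟩ := hslide
    exact ⟨i, hi, hT.row_promote_add_one hi hc ▸ .inl he⟩
  push Not at hslide
  have hvlt : v + 1 ≤ r * c := by
    have hne := hslide (r - 1) (by lia)
    rw [Nat.sub_add_cancel hr, slideEntry_self] at hne
    lia
  obtain ⟨i, j, hi, hj, he⟩ := hT.2.2.2 (v + 1) (by lia) hvlt
  refine ⟨i, hi, hT.row_promote_add_one hi hc ▸ .inr ⟨⟨j, hj, he⟩, fun hs => ?_⟩⟩
  rcases i with _ | i
  · have := hs.trans (hT.slideEntry_zero hr hc)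
    lia
  · exact hslide i (by lia) hs

protected theorem promote (hT : IsRectSYT r c T) : IsRectSYT r c (promote r c T) :=
  ⟨fun _ _ => hT.promote_lt_promote_right, fun _ _ => hT.promote_lt_promote_down,
    fun _ _ => hT.promote_mem_Icc, fun _ => hT.exists_promote_eq⟩

end IsRectSYT

end Promotion

section Rotation

variable {r c i : ℕ} {T : ℕ → ℕ → ℕ} {U : Set ℕ}

namespace IsRectSYT

theorem isNoncrossingMatching_rowArcs_promote_add_one (hT : IsRectSYT r c T) (k : Fin (r - 1)) :
    IsNoncrossingMatching ((fun j => promote r c T k j + 1) '' Set.Iio c)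
      ((fun j => promote r c T (k + 1) j + 1) '' Set.Iio c)
      (rowArcs c (fun i j => promote r c T i j + 1) k) :=
  _root_.isNoncrossingMatching_rowArcs (T := fun i j => promote r c T i j + 1)
    (hT.promote.isStandardPair (by lia)).add_one

theorem mem_Icc_of_mem_mDiagram (hT : IsRectSYT r c T) {p : ℕ × ℕ} (hp : p ∈ mDiagram r c T) :
    1 ≤ p.1 ∧ p.2 ≤ r * c :=
  ⟨(Finset.mem_Icc.1 (hT.endpoints_mDiagram_subset (fst_mem_endpoints hp))).1,
    (Finset.mem_Icc.1 (hT.endpoints_mDiagram_subset (snd_mem_endpoints hp))).2⟩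

theorem exists_rowArcs_snd_eq_slideEntry (hT : IsRectSYT r c T) (hi : i + 1 < r) (hc : 0 < c) :
    ∃ p ∈ rowArcs c T i, slideEntry r c T i ∈ Set.Icc p.1 p.2 ∧ p.2 = slideEntry r c T (i + 1) := by
  have hmatch := hT.isNoncrossingMatching_rowArcs ⟨i, by lia⟩
  have hcol := slideCol_lt r hc T
  obtain ⟨p, hp, hp2⟩ := hmatch.snd_bijOn.surjOn (Set.mem_image_of_mem _ (hcol (i + 1)))
  have hle : p.1 ≤ T i (slideCol r c T i) :=
    hmatch.fst_le_of_snd_eq (hT.row_strictMonoOn (by lia)) (hT.row_strictMonoOn hi) (hcol i)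
      (hcol (i + 1)) (fun k hk hk' => hT.entry_lt_of_mem_Ico_slideCol hi ⟨hk, hk'⟩)
      (fun h => (lt_of_slideCol_succ_add_one_lt h).2) hp hp2
  have hp2' : p.2 = slideEntry r c T (i + 1) := by rw [slideEntry_of_lt hi, hp2]
  refine ⟨p, hp, ⟨by rwa [slideEntry_of_lt (by lia)], ?_⟩, hp2'⟩
  exact hp2' ▸ (hT.slideEntry_lt_slideEntry_succ (by lia) hc).le

theorem exists_rowArcs_promote_fst_eq_slideEntry (hT : IsRectSYT r c T) (hi : i + 1 < r)
    (hc : 0 < c) : ∃ p ∈ rowArcs c (fun i j => promote r c T i j + 1) i,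
      p.1 = slideEntry r c T (i + 1) ∧ slideEntry r c T (i + 2) ∈ Set.Icc p.1 p.2 := by
  have hmatch := hT.isNoncrossingMatching_rowArcs_promote_add_one ⟨i, by lia⟩
  have hpair := (hT.promote.isStandardPair hi).add_one
  have hcol := slideCol_lt r hc T
  obtain ⟨p, hp, hp1⟩ := hmatch.fst_bijOn.surjOn (Set.mem_image_of_mem _ (hcol (i + 1)))
  have ballot : ∀ k, slideCol r c T (i + 1) ≤ k → k < slideCol r c T (i + 2) →
      promote r c T i (k + 1) + 1 < promote r c T (i + 1) k + 1 := fun k hk hk' => by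
    have hkc : k + 1 < c := Nat.lt_of_le_of_lt hk' (hcol (i + 2))
    rw [hT.promote_add_one_of_mem_Ico hi ⟨hk, hk'⟩,
      hT.promote_add_one_of_notMem_Icc (by lia) (by lia) fun h =>
        (Nat.lt_succ_of_le hk).not_ge h.2]
    exact hT.2.1 i (k + 1) hi (by lia)
  have before : ∀ k < slideCol r c T (i + 1), promote r c T (i + 1) k + 1 <
      promote r c T i (slideCol r c T (i + 1)) + 1 := fun k hk => by
    have hkc := hk.trans (hcol _)
    rw [hT.promote_add_one_of_notMem_Icc hi hkc fun h => hk.not_ge h.1,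
      hT.promote_add_one_slideCol_succ (by lia) hc, slideEntry_of_lt hi]
    exact hT.row_strictMonoOn hi hkc (hcol _) hk
  have hle := hmatch.le_snd_of_fst_eq hpair.fst_strictMonoOn hpair.snd_strictMonoOn (hcol (i + 1))
    (hcol (i + 2)) ballot before hp hp1
  dsimp only at hle hp1
  rw [hT.promote_add_one_slideCol_succ hi hc] at hle
  rw [hT.promote_add_one_slideCol_succ (by lia) hc] at hp1
  exact ⟨p, hp, hp1, hp1 ▸ (hT.slideEntry_lt_slideEntry_succ hi hc).le, hle⟩

theorem slideEntry_notMem_shadow (hT : IsRectSYT r c T) (hr : 0 < r) (hc : 0 < c)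
    (hU : IsArcClosed (mDiagram r c T : Set (ℕ × ℕ)) U) (h1 : 1 ∉ U) (hn : r * c + 1 ∉ U) :
    ∀ k ≤ r, slideEntry r c T k ∉ shadow (mDiagram r c T : Set (ℕ × ℕ)) U := by
  intro k hk hmem
  induction k with
  | zero =>
    rw [hT.slideEntry_zero hr hc] at hmem
    exact h1 (hU.mem_of_mem_shadow hmem fun p hp => .inl (hT.mem_Icc_of_mem_mDiagram hp).1)
  | succ i ih =>
    rcases hk.lt_or_eq with hir | rfl
    · obtain ⟨p, hp, hmem_Icc, hp2⟩ := hT.exists_rowArcs_snd_eq_slideEntry hir hc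
      have hpM : p ∈ (mDiagram r c T : Set (ℕ × ℕ)) := by
        rw [coe_mDiagram]
        exact Set.mem_iUnion_of_mem (⟨i, by lia⟩ : Fin (r - 1)) hp
      exact ih (by lia) (hU.Icc_subset_shadow hpM (.inr (hp2 ▸ hmem)) hmem_Icc)
    · rw [slideEntry_self] at hmem
      exact hn (hU.mem_of_mem_shadow hmem fun p hp =>
        .inr ((hT.mem_Icc_of_mem_mDiagram hp).2.trans (Nat.le_succ _)))

theorem slideEntry_notMem_shadow_promote (hT : IsRectSYT r c T) (hr : 0 < r) (hc : 0 < c)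
    (hU : IsArcClosed (mDiagram r c fun i j => promote r c T i j + 1 : Set (ℕ × ℕ)) U)
    (h1 : 1 ∉ U) (hn : r * c + 1 ∉ U) : ∀ k ≤ r, slideEntry r c T k ∉
      shadow (mDiagram r c fun i j => promote r c T i j + 1 : Set (ℕ × ℕ)) U := by
  have bounds : ∀ p ∈ (mDiagram r c fun i j => promote r c T i j + 1 : Set (ℕ × ℕ)),
      1 ≤ p.1 ∧ p.2 ≤ r * c + 1 := by
    rw [coe_mDiagram_add_one]
    rintro _ ⟨p, hp, rfl⟩
    exact ⟨Nat.le_add_left 1 _, Nat.succ_le_succ (hT.promote.mem_Icc_of_mem_mDiagram hp).2⟩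
  intro k hk hmem
  induction hk using Nat.decreasingInduction with
  | self =>
    rw [slideEntry_self] at hmem
    exact hn (hU.mem_of_mem_shadow hmem fun p hp => .inr (bounds p hp).2)
  | of_succ k hk ih =>
    rcases k with _ | i
    · rw [hT.slideEntry_zero hr hc] at hmem
      exact h1 (hU.mem_of_mem_shadow hmem fun p hp => .inl (bounds p hp).1)
    · obtain ⟨p, hp, hp1, hmem_Icc⟩ := hT.exists_rowArcs_promote_fst_eq_slideEntry hk hc
      have hpM : p ∈ (mDiagram r c fun i j => promote r c T i j + 1 : Set (ℕ × ℕ)) := by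
        rw [coe_mDiagram]
        exact Set.mem_iUnion_of_mem (⟨i, by lia⟩ : Fin (r - 1)) hp
      exact ih (hU.Icc_subset_shadow hpM (.inl (hp1 ▸ hmem)) hmem_Icc)

theorem isArcClosed_promote_add_one_iff_of_notMem (hT : IsRectSYT r c T) (hr : 0 < r) (hc : 0 < c)
    (h1 : 1 ∉ U) (hn : r * c + 1 ∉ U) :
    IsArcClosed (mDiagram r c fun i j => promote r c T i j + 1 : Set (ℕ × ℕ)) U ↔
      IsArcClosed (mDiagram r c T : Set (ℕ × ℕ)) U := by
  have row_agree : ∀ {M : Set (ℕ × ℕ)}, (∀ k ≤ r, slideEntry r c T k ∉ shadow M U) →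
      ∀ i < r, ∀ v ∈ shadow M U,
        v ∈ (fun j => promote r c T i j + 1) '' Set.Iio c ↔ v ∈ T i '' Set.Iio c :=
    fun hM i hi v hv => hT.mem_row_promote_add_one_iff hi hc fun k hk he => hM k hk (he ▸ hv)
  constructor
  · intro h
    have agree := row_agree (hT.slideEntry_notMem_shadow_promote hr hc h h1 hn)
    rw [coe_mDiagram] at h agree ⊢
    exact h.of_agree_on_shadow hT.isNoncrossingMatching_rowArcs_promote_add_one
      hT.isNoncrossingMatching_rowArcs (fun k => agree k (by lia))
      fun k => agree (k + 1) (by lia)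
  · intro h
    have agree := row_agree (hT.slideEntry_notMem_shadow hr hc h h1 hn)
    rw [coe_mDiagram] at h agree ⊢
    exact h.of_agree_on_shadow hT.isNoncrossingMatching_rowArcs
      hT.isNoncrossingMatching_rowArcs_promote_add_one (fun k v hv => (agree k (by lia) v hv).symm)
      fun k v hv => (agree (k + 1) (by lia) v hv).symm

theorem isArcClosed_promote_add_one_iff (hT : IsRectSYT r c T) (hr : 0 < r) (hc : 0 < c)
    (hU : 1 ∈ U ↔ r * c + 1 ∈ U) :
    IsArcClosed (mDiagram r c fun i j => promote r c T i j + 1 : Set (ℕ × ℕ)) U ↔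
      IsArcClosed (mDiagram r c T : Set (ℕ × ℕ)) U := by
  by_cases h1 : 1 ∈ U
  · have hcompl : ∀ {M : Set (ℕ × ℕ)}, IsArcClosed M Uᶜ ↔ IsArcClosed M U :=
      ⟨fun h => compl_compl U ▸ h.compl, fun h => h.compl⟩
    rw [← hcompl, hT.isArcClosed_promote_add_one_iff_of_notMem hr hc (not_not_intro h1)
      (not_not_intro (hU.1 h1)), hcompl]
  · exact hT.isArcClosed_promote_add_one_iff_of_notMem hr hc h1 (mt hU.2 h1)

theorem isArcClosed_preimage_rotIdx_iff (hT : IsRectSYT r c T) (hr : 0 < r) (hc : 0 < c)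
    (S : Set ℕ) : IsArcClosed (mDiagram r c T : Set (ℕ × ℕ)) (rotIdx (r * c) ⁻¹' S) ↔
      IsArcClosed (mDiagram r c (promote r c T) : Set (ℕ × ℕ)) S := by
  have hn : 0 < r * c := Nat.mul_pos hr hc
  have rotIdx_add_one : ∀ v, 1 ≤ v → rotIdx (r * c) (v + 1) = v := fun v hv => by
    simp [rotIdx, Nat.one_le_iff_ne_zero.1 hv]
  have hU : 1 ∈ rotIdx (r * c) ⁻¹' S ↔ r * c + 1 ∈ rotIdx (r * c) ⁻¹' S := by
    rw [Set.mem_preimage, Set.mem_preimage, rotIdx_add_one _ hn, rotIdx, if_pos rfl]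
  have hshift : ∀ p ∈ (mDiagram r c (promote r c T) : Set (ℕ × ℕ)),
      (p.1 ∈ S ↔ p.1 + 1 ∈ rotIdx (r * c) ⁻¹' S) ∧ (p.2 ∈ S ↔ p.2 + 1 ∈ rotIdx (r * c) ⁻¹' S) :=
    fun p hp => by
      have hsub := hT.promote.endpoints_mDiagram_subset
      have h1 := (Finset.mem_Icc.1 (hsub (fst_mem_endpoints hp))).1
      have h2 := (Finset.mem_Icc.1 (hsub (snd_mem_endpoints hp))).1
      simp only [Set.mem_preimage, rotIdx_add_one _ h1, rotIdx_add_one _ h2, and_self]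
  rw [← hT.isArcClosed_promote_add_one_iff hr hc hU, isArcClosed_mDiagram_add_one]
  exact ⟨fun h => h.congr fun p hp => (hshift p hp).imp Iff.symm Iff.symm, fun h => h.congr hshift⟩

end IsRectSYT

theorem injOn_rotIdx (n : ℕ) : Set.InjOn (rotIdx n) (Finset.Icc 1 n) := by
  intro a ha b hb h
  simp only [Finset.coe_Icc, Set.mem_Icc] at ha hb
  simp only [rotIdx] at h
  grind

theorem image_rotIdx_Icc (n : ℕ) : (Finset.Icc 1 n).image (rotIdx n) = Finset.Icc 1 n := by
  refine Finset.eq_of_subset_of_card_le (fun v hv => ?_)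
    (Finset.card_image_of_injOn (injOn_rotIdx n)).ge
  obtain ⟨a, ha, rfl⟩ := Finset.mem_image.1 hv
  simp only [Finset.mem_Icc, rotIdx] at ha ⊢
  grind

namespace IsRectSYT

theorem injOn_rotIdx (hT : IsRectSYT r c T) :
    Set.InjOn (rotIdx (r * c)) (endpoints (mDiagram r c T)) :=
  (_root_.injOn_rotIdx _).mono (Finset.coe_subset.2 hT.endpoints_mDiagram_subset)

theorem endpoints_mDiagram_promote (hT : IsRectSYT r c T) (hr : 0 < r) :
    endpoints (mDiagram r c (promote r c T)) =
      (endpoints (mDiagram r c T)).image (rotIdx (r * c)) := by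
  rcases Nat.lt_or_eq_of_le (Nat.succ_le_of_lt hr) with hr1 | rfl
  · rw [hT.promote.endpoints_mDiagram hr1, hT.endpoints_mDiagram hr1, image_rotIdx_Icc]
  · rfl

theorem image_endpoints_setOf_isComponent_promote (hT : IsRectSYT r c T) (hr : 0 < r)
    (hc : 0 < c) : endpoints '' {C | IsComponent (mDiagram r c (promote r c T)) C} =
      rotSetPow (r * c) 1 '' (endpoints '' {C | IsComponent (mDiagram r c T) C}) :=
  image_endpoints_setOf_isComponent_of_injOn hT.injOn_rotIdx (hT.endpoints_mDiagram_promote hr)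
    (hT.isArcClosed_preimage_rotIdx_iff hr hc)

theorem injOn_rotSetPow (hT : IsRectSYT r c T) :
    Set.InjOn (rotSetPow (r * c) 1) (endpoints '' {C | IsComponent (mDiagram r c T) C}) := by
  rintro _ ⟨C, hC, rfl⟩ _ ⟨D, hD, rfl⟩ h
  exact Finset.image_injOn_powerset_of_injOn hT.injOn_rotIdx
    (Finset.mem_powerset.2 (endpoints_subset_endpoints hC.1.1))
    (Finset.mem_powerset.2 (endpoints_subset_endpoints hD.1.1)) h

end IsRectSYT

end Rotation

/-- The endpoint sets of the components of `φ(P(T))` are exactly the images under `ρ`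
of the endpoint sets of the components of `φ(T)`; in particular `φ(T)` and `φ(P(T))`
have the same number of components. -/
theorem component_endpoints_rotate (r c : ℕ) (T : ℕ → ℕ → ℕ)
    (hr : 0 < r) (hc : 0 < c) (hT : IsRectSYT r c T) :
    (∀ C, IsComponent (mDiagram r c T) C →
       ∃ C', IsComponent (mDiagram r c (promote r c T)) C' ∧
         endpoints C' = rotSetPow (r * c) 1 (endpoints C)) ∧
    (∀ C', IsComponent (mDiagram r c (promote r c T)) C' →
       ∃ C, IsComponent (mDiagram r c T) C ∧
         endpoints C' = rotSetPow (r * c) 1 (endpoints C)) ∧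
    {C | IsComponent (mDiagram r c T) C}.ncard
      = {C | IsComponent (mDiagram r c (promote r c T)) C}.ncard := by
  have rotate := hT.image_endpoints_setOf_isComponent_promote hr hc
  refine ⟨fun C hC => rotate.superset ⟨_, ⟨C, hC, rfl⟩, rfl⟩, fun C' hC' => ?_, ?_⟩
  · obtain ⟨_, ⟨C, hC, rfl⟩, hrot⟩ := rotate.subset ⟨C', hC', rfl⟩
    exact ⟨C, hC, hrot.symm⟩
  · rw [← (injOn_endpoints_setOf_isComponent _).ncard_image, ← hT.injOn_rotSetPow.ncard_image,
      ← rotate, (injOn_endpoints_setOf_isComponent _).ncard_image]
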